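/- Let A := {a ∈ C*_r(G) : j(a)(γ) = 0 for all γ ∈ G ∖ Ii}. For y ∈ G⁽⁰⁾ let P_{Ii y} be the orthogonal projection of ℓ²(Gy) onto ℓ²(Ii y) and define Φ_y(a) := P_{Ii y} λ_y(a) P_{Ii y}. Then for every b ∈ A, sup_{y ∈ G⁽⁰⁾} ‖Φ_y(b)‖ = ‖b‖; that is, the map b ↦ ⊕_{y ∈ G⁽⁰⁾} Φ_y(b) is isometric on A. -/

import Mathlib

/-- A locally compact Hausdorff étale groupoid, modelled as a type `G` with a
partially defined multiplication (encoded by a total function, meaningful on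
composable pairs), inversion, and source and range maps into the unit space. -/
structure EtaleGroupoid (G : Type*) [TopologicalSpace G] where
  src : G → G
  rng : G → G
  mul : G → G → G
  inv : G → G
  src_src : ∀ γ, src (src γ) = src γ
  rng_src : ∀ γ, rng (src γ) = src γ
  src_rng : ∀ γ, src (rng γ) = rng γ
  rng_rng : ∀ γ, rng (rng γ) = rng γ
  mul_assoc' : ∀ a b c, src a = rng b → src b = rng c →
      mul (mul a b) c = mul a (mul b c)
  src_mul : ∀ a b, src a = rng b → src (mul a b) = src b
  rng_mul : ∀ a b, src a = rng b → rng (mul a b) = rng a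
  mul_src_self : ∀ a, mul a (src a) = a
  rng_self_mul : ∀ a, mul (rng a) a = a
  src_inv : ∀ a, src (inv a) = rng a
  rng_inv : ∀ a, rng (inv a) = src a
  inv_mul_self : ∀ a, mul (inv a) a = src a
  mul_inv_self : ∀ a, mul a (inv a) = rng a
  continuous_src : Continuous src
  continuous_rng : Continuous rng
  continuous_inv : Continuous inv
  continuous_mul : Continuous fun p : {p : G × G // src p.1 = rng p.2} => mul p.1.1 p.1.2
  isOpen_unitSpace : IsOpen {x | src x = x}
  etale : ∀ γ, ∃ U : Set G, IsOpen U ∧ γ ∈ U ∧ Set.InjOn src U ∧ IsOpen (src '' U)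

namespace EtaleGroupoid

variable {G : Type*} [TopologicalSpace G] (E : EtaleGroupoid G)

/-- The unit space `G⁽⁰⁾`. -/
def unitSpace : Set G := {x | E.src x = x}

/-- `Gx = s⁻¹(x)`. -/
def Gx (x : G) : Set G := {γ | E.src γ = x}

/-- `xG = r⁻¹(x)`. -/
def xG (x : G) : Set G := {γ | E.rng γ = x}

/-- The isotropy `Iso(G) = ⋃ₓ (xG ∩ Gx)`. -/
def Iso : Set G := {γ | E.src γ = E.rng γ}

/-- `Ii = Iso(G)°`, the interior of the isotropy. -/
def Ii : Set G := interior E.Iso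

/-- `Iicl`, the closure of `Ii` in `G`. -/
def Iicl : Set G := closure E.Ii

/-- `Ii` is abelian: elements of `Ii` with the same source commute. -/
def IsAbelianIi : Prop :=
  ∀ a ∈ E.Ii, ∀ b ∈ E.Ii, E.src a = E.src b → E.mul a b = E.mul b a

/-- An open bisection: an open set on which both `src` and `rng` are injective. -/
def IsOpenBisection (B : Set G) : Prop :=
  IsOpen B ∧ Set.InjOn E.src B ∧ Set.InjOn E.rng B

/-- The set product `CD = {γδ : γ ∈ C, δ ∈ D, s(γ) = r(δ)}`. -/
def setMul (C D : Set G) : Set G :=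
  {g | ∃ c ∈ C, ∃ d ∈ D, E.src c = E.rng d ∧ g = E.mul c d}

/-- Natural-number set powers, with the convention `C⁰ = s(C)`. -/
def npowSet (C : Set G) : ℕ → Set G
  | 0 => E.src '' C
  | 1 => C
  | n + 2 => E.setMul (npowSet C (n + 1)) C

/-- Integer set powers: `C^(-m) = (C⁻¹)^m`. -/
def zpowSet (C : Set G) (m : ℤ) : Set G :=
  if 0 ≤ m then E.npowSet C m.toNat else E.npowSet (E.inv '' C) (-m).toNat

/-- Natural-number powers of an element, with `γ⁰ = s(γ)`. -/
def npow (γ : G) : ℕ → G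
  | 0 => E.src γ
  | n + 1 => E.mul (npow γ n) γ

/-- Integer powers of an element. -/
def zpow (γ : G) (m : ℤ) : G :=
  if 0 ≤ m then E.npow γ m.toNat else E.npow (E.inv γ) (-m).toNat

/-- The product of the sets `F i` over a list `l` of indices, multiplied on the
right by the set `T`. -/
def listSetProd {ι : Type*} (l : List ι) (F : ι → Set G) (T : Set G) : Set G :=
  l.foldr (fun i P => E.setMul (F i) P) T

/-- The product of the elements `f i` over a list `l` of indices, multiplied on the
right by `x`. -/
def listProd {ι : Type*} (l : List ι) (f : ι → G) (x : G) : G :=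
  l.foldr (fun i p => E.mul (f i) p) x

/-- `H` is a subgroup of the isotropy group `Iso(G)x = xG ∩ Gx` at the unit `x`. -/
def IsSubgroupAt (x : G) (H : Set G) : Prop :=
  (∀ a ∈ H, E.src a = x ∧ E.rng a = x) ∧ x ∈ H ∧
    (∀ a ∈ H, ∀ b ∈ H, E.mul a b ∈ H) ∧ ∀ a ∈ H, E.inv a ∈ H

/-- The subgroup of `Iso(G)x` generated by `gens`. -/
def subgroupClosureAt (x : G) (gens : Set G) : Set G :=
  ⋂₀ {H : Set G | E.IsSubgroupAt x H ∧ gens ⊆ H}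

/-- `q` restricts to a group homomorphism from the subgroup `H` of `Iso(G)x`
into the group `T` (a subgroup of the isotropy group at `y`). -/
def IsGroupHomOn (x y : G) (H : Set G) (T : Set G) (q : G → G) : Prop :=
  (∀ a ∈ H, q a ∈ T) ∧ q x = y ∧
    ∀ a ∈ H, ∀ b ∈ H, q (E.mul a b) = E.mul (q a) (q b)

end EtaleGroupoid

/-!
Let `H` be a wide subgroupoid and let `b` satisfy `j(b) = 0` off `H`. The matrix coefficient of
`λ_y(b)` at `(γ, η)` is `j(b)(γη⁻¹)`, so `λ_y(b)` is block diagonal with respect to the partition of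
`Gy` into the right cosets `(H r(η))η`, and its norm is the supremum of the norms of its blocks.
Right translation by `η` is an isometry that intertwines the block at `η` with the compression of
`λ_{r(η)}(b)` to `ℓᵖ(H r(η))`, so the compressions already see the whole norm of `b`.

The interior `Ii` of the isotropy is such an `H`. The point is closure under products, which follows
once products of open sets are known to be open: if `f` and `g` are bump functions at `γ` and `δ`
and the support of `g` lies in a bisection, then `j(f * g)` is continuous, does not vanish at `γδ`,
and vanishes off the product of the supports.
-/

open scoped ENNReal

section Lp

variable {ι κ 𝕜 : Type*} {p : ℝ≥0∞}

theorem memℓp_comp_injective {F : Type*} [NormedAddCommGroup F] {f : ι → F}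
    (hf : Memℓp f p) {e : κ → ι} (he : e.Injective) : Memℓp (fun k => f (e k)) p := by
  obtain rfl | rfl | hp := p.trichotomy
  · exact memℓp_zero (hf.finite_dsupport.preimage he.injOn)
  · exact memℓp_infty (hf.bddAbove.mono (Set.range_comp_subset_range e fun i => ‖f i‖))
  · exact memℓp_gen ((hf.summable hp).comp_injective he)

section Coordinates

variable [NontriviallyNormedField 𝕜] {E : ι → Type*} [∀ i, NormedAddCommGroup (E i)]
  [∀ i, NormedSpace 𝕜 (E i)] [Fact (1 ≤ p)]

variable (𝕜) in
open Classical in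
/-- The coordinate projection of `ℓᵖ` onto the elements supported in `S`. -/
noncomputable def lpCoordProj (S : Set ι) : lp E p →L[𝕜] lp E p :=
  LinearMap.mkContinuous
    { toFun := fun f => ⟨fun i => if i ∈ S then f i else 0,
        (lp.memℓp f).mono' fun i => by split_ifs <;> simp⟩
      map_add' := fun f g => lp.ext <| funext fun i => ite_add_zero
      map_smul' := fun c f => lp.ext <| funext fun i => (smul_ite_zero _ c (f i)).symm }
    1 fun f => by
      rw [one_mul]
      exact lp.norm_mono (zero_lt_one.trans_le Fact.out).ne' fun i => by
        simp only [LinearMap.coe_mk, AddHom.coe_mk]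
        split_ifs <;> simp

theorem lpCoordProj_apply_of_mem {S : Set ι} {i : ι} (hi : i ∈ S) (f : lp E p) :
    lpCoordProj 𝕜 S f i = f i :=
  if_pos hi

theorem lpCoordProj_apply_of_notMem {S : Set ι} {i : ι} (hi : i ∉ S) (f : lp E p) :
    lpCoordProj 𝕜 S f i = 0 :=
  if_neg hi

theorem eq_lpCoordProj {S : Set ι} {P : lp E p →L[𝕜] lp E p}
    (hmem : ∀ f, ∀ i ∈ S, P f i = f i) (hnotMem : ∀ f, ∀ i ∉ S, P f i = 0) :
    P = lpCoordProj 𝕜 S := by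
  ext f i
  by_cases hi : i ∈ S
  · rw [hmem f i hi, lpCoordProj_apply_of_mem hi]
  · rw [hnotMem f i hi, lpCoordProj_apply_of_notMem hi]

theorem lpCoordProj_eq_self {S : Set ι} {f : lp E p} (hf : ∀ i ∉ S, f i = 0) :
    lpCoordProj 𝕜 S f = f := by
  ext i
  by_cases hi : i ∈ S
  · rw [lpCoordProj_apply_of_mem hi]
  · rw [lpCoordProj_apply_of_notMem hi, hf i hi]

theorem lpCoordProj_eq_zero {S : Set ι} {f : lp E p} (hf : ∀ i ∈ S, f i = 0) :
    lpCoordProj 𝕜 S f = 0 := by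
  ext i
  by_cases hi : i ∈ S
  · rw [lpCoordProj_apply_of_mem hi, hf i hi, lp.coeFn_zero, Pi.zero_apply]
  · rw [lpCoordProj_apply_of_notMem hi, lp.coeFn_zero, Pi.zero_apply]

theorem lpCoordProj_idem (S : Set ι) (f : lp E p) :
    lpCoordProj 𝕜 S (lpCoordProj 𝕜 S f) = lpCoordProj 𝕜 S f :=
  lpCoordProj_eq_self fun _ hi => lpCoordProj_apply_of_notMem hi f

theorem norm_lpCoordProj_le (S : Set ι) : ‖(lpCoordProj 𝕜 S : lp E p →L[𝕜] lp E p)‖ ≤ 1 :=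
  LinearMap.mkContinuous_norm_le _ zero_le_one _

theorem norm_lpCoordProj_comp_comp_le (S : Set ι) (T : lp E p →L[𝕜] lp E p) :
    ‖(lpCoordProj 𝕜 S).comp (T.comp (lpCoordProj 𝕜 S))‖ ≤ ‖T‖ := by
  have hS := norm_lpCoordProj_le (𝕜 := 𝕜) (E := E) (p := p) S
  calc ‖(lpCoordProj 𝕜 S).comp (T.comp (lpCoordProj 𝕜 S))‖
      ≤ ‖(lpCoordProj 𝕜 S : lp E p →L[𝕜] lp E p)‖ *
          (‖T‖ * ‖(lpCoordProj 𝕜 S : lp E p →L[𝕜] lp E p)‖) :=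
        (ContinuousLinearMap.opNorm_comp_le _ _).trans
          (by gcongr; exact ContinuousLinearMap.opNorm_comp_le _ _)
    _ ≤ 1 * (‖T‖ * 1) := by gcongr
    _ = ‖T‖ := by rw [one_mul, mul_one]

theorem hasSum_norm_lpCoordProj_fiber {α : Type*} (hp : p ≠ ∞) (q : ι → α) (f : lp E p) :
    HasSum (fun c => ‖lpCoordProj 𝕜 (q ⁻¹' {c}) f‖ ^ p.toReal) (‖f‖ ^ p.toReal) := by
  have hp0 : 0 < p.toReal := ENNReal.toReal_pos (zero_lt_one.trans_le Fact.out).ne' hp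
  have hsigma := (Equiv.sigmaFiberEquiv q).hasSum_iff.mpr (lp.hasSum_norm hp0 f)
  convert hsigma.sigma fun c => (hsigma.summable.sigma_factor c).hasSum using 2 with c
  rw [lp.norm_rpow_eq_tsum hp0]
  refine Eq.trans (tsum_congr fun i => ?_)
    (tsum_subtype {i | q i = c} fun i => ‖f i‖ ^ p.toReal).symm
  by_cases hi : i ∈ q ⁻¹' {c}
  · rw [lpCoordProj_apply_of_mem hi, Set.indicator_of_mem (by exact hi)]
  · rw [lpCoordProj_apply_of_notMem hi, Set.indicator_of_notMem (by exact hi), norm_zero,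
      Real.zero_rpow hp0.ne']

theorem opNorm_le_of_commute_lpCoordProj_fiber {α : Type*} (hp : p ≠ ∞) (q : ι → α)
    {T : lp E p →L[𝕜] lp E p} (hT : ∀ c, Commute T (lpCoordProj 𝕜 (q ⁻¹' {c})))
    {M : ℝ} (hM : 0 ≤ M)
    (hblock : ∀ c, ‖(lpCoordProj 𝕜 (q ⁻¹' {c})).comp (T.comp (lpCoordProj 𝕜 (q ⁻¹' {c})))‖ ≤ M) :
    ‖T‖ ≤ M := by
  have hp0 : 0 < p.toReal := ENNReal.toReal_pos (zero_lt_one.trans_le Fact.out).ne' hp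
  refine T.opNorm_le_bound hM fun f => ?_
  have hclass : ∀ c, ‖lpCoordProj 𝕜 (q ⁻¹' {c}) (T f)‖ ≤ M * ‖lpCoordProj 𝕜 (q ⁻¹' {c}) f‖ := by
    intro c
    have hcomm : T (lpCoordProj 𝕜 (q ⁻¹' {c}) f) = lpCoordProj 𝕜 (q ⁻¹' {c}) (T f) :=
      DFunLike.congr_fun (hT c) f
    simpa only [ContinuousLinearMap.comp_apply, lpCoordProj_idem, hcomm] using
      ContinuousLinearMap.le_of_opNorm_le _ (hblock c) (lpCoordProj 𝕜 (q ⁻¹' {c}) f)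
  refine (Real.rpow_le_rpow_iff (norm_nonneg _) (by positivity) hp0).mp ?_
  rw [Real.mul_rpow hM (norm_nonneg f)]
  refine hasSum_le (fun c => ?_) (hasSum_norm_lpCoordProj_fiber (𝕜 := 𝕜) hp q (T f))
    ((hasSum_norm_lpCoordProj_fiber (𝕜 := 𝕜) hp q f).mul_left _)
  rw [← Real.mul_rpow hM (norm_nonneg _)]
  gcongr
  exact hclass c

end Coordinates

section Reindex

variable [NontriviallyNormedField 𝕜] {F : Type*} [NormedAddCommGroup F] [NormedSpace 𝕜 F]
  [Fact (1 ≤ p)]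

variable (𝕜) in
/-- Reindexing of `ℓᵖ` along a bijection, as a linear isometry; the value of the image of `f` at
`k` is `f (e.symm k)`. -/
noncomputable def lpCongrLeft (e : ι ≃ κ) :
    lp (fun _ : ι => F) p ≃ₗᵢ[𝕜] lp (fun _ : κ => F) p where
  toFun f := ⟨fun k => f (e.symm k), memℓp_comp_injective (lp.memℓp f) e.symm.injective⟩
  invFun g := ⟨fun i => g (e i), memℓp_comp_injective (lp.memℓp g) e.injective⟩
  map_add' _ _ := rfl
  map_smul' _ _ := rfl
  left_inv f := lp.ext <| funext fun i => congrArg f (e.symm_apply_apply i)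
  right_inv g := lp.ext <| funext fun k => congrArg g (e.apply_symm_apply k)
  norm_map' f := by
    obtain hp | rfl | hp := p.trichotomy
    · exact absurd hp (zero_lt_one.trans_le Fact.out).ne'
    · exact e.symm.iSup_comp (g := fun i => ‖f i‖)
    · rw [lp.norm_eq_tsum_rpow hp, lp.norm_eq_tsum_rpow hp]
      exact congrArg (· ^ (1 / p.toReal)) (e.symm.tsum_eq fun i => ‖f i‖ ^ p.toReal)

theorem lpCongrLeft_apply_apply (e : ι ≃ κ) (f : lp (fun _ : ι => F) p) (i : ι) :
    lpCongrLeft 𝕜 e f (e i) = f i :=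
  congrArg f (e.symm_apply_apply i)

theorem lpCongrLeft_single [DecidableEq ι] [DecidableEq κ] (e : ι ≃ κ) (i : ι) (a : F) :
    lpCongrLeft 𝕜 e (lp.single p i a) = lp.single p (e i) a := by
  ext k
  obtain ⟨i', rfl⟩ := e.surjective k
  rw [lpCongrLeft_apply_apply, lp.single_apply, lp.single_apply]
  simp only [Pi.single_apply, e.injective.eq_iff]

theorem lpCoordProj_lpCongrLeft (e : ι ≃ κ) (S : Set κ) (f : lp (fun _ : ι => F) p) :
    lpCoordProj 𝕜 S (lpCongrLeft 𝕜 e f) = lpCongrLeft 𝕜 e (lpCoordProj 𝕜 (e ⁻¹' S) f) := by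
  ext k
  obtain ⟨i, rfl⟩ := e.surjective k
  rw [lpCongrLeft_apply_apply]
  by_cases hi : e i ∈ S
  · rw [lpCoordProj_apply_of_mem hi, lpCoordProj_apply_of_mem (by exact hi),
      lpCongrLeft_apply_apply]
  · rw [lpCoordProj_apply_of_notMem hi, lpCoordProj_apply_of_notMem (by exact hi)]

end Reindex

section Matrix

variable [NontriviallyNormedField 𝕜] [Fact (1 ≤ p)] [DecidableEq ι]

theorem lp_ext_single {F : Type*} [AddCommMonoid F] [Module 𝕜 F] [TopologicalSpace F] [T2Space F]
    (hp : p ≠ ∞) {S T : lp (fun _ : ι => 𝕜) p →L[𝕜] F}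
    (h : ∀ i, S (lp.single p i 1) = T (lp.single p i 1)) : S = T :=
  lp.ext_continuousLinearMap hp fun i => ContinuousLinearMap.ext_ring (h i)

theorem hasSum_mul_apply_single (hp : p ≠ ∞)
    (T : lp (fun _ : ι => 𝕜) p →L[𝕜] lp (fun _ : κ => 𝕜) p) (f : lp (fun _ : ι => 𝕜) p) (k : κ) :
    HasSum (fun i => f i * T (lp.single p i 1) k) (T f k) := by
  let ev := lp.evalCLM 𝕜 (fun _ : κ => 𝕜) p k
  have hterm : ∀ i, ev.comp T (lp.single p i (f i)) = f i * T (lp.single p i 1) k := by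
    intro i
    have hi : lp.single (E := fun _ : ι => 𝕜) p i (f i) = f i • lp.single p i (1 : 𝕜) := by
      rw [← lp.single_smul, smul_eq_mul, mul_one]
    rw [hi, map_smul]
    rfl
  have hsum := (ev.comp T).hasSum (lp.hasSum_single hp f)
  simp only [hterm] at hsum
  exact hsum

theorem commute_lpCoordProj_of_forall_ne_zero (hp : p ≠ ∞)
    {T : lp (fun _ : ι => 𝕜) p →L[𝕜] lp (fun _ : ι => 𝕜) p} {S : Set ι}
    (hT : ∀ i k, T (lp.single p i 1) k ≠ 0 → (i ∈ S ↔ k ∈ S)) :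
    Commute T (lpCoordProj 𝕜 S) := by
  refine lp_ext_single hp fun i => ?_
  change T (lpCoordProj 𝕜 S (lp.single p i 1)) = lpCoordProj 𝕜 S (T (lp.single p i 1))
  by_cases hi : i ∈ S
  · rw [lpCoordProj_eq_self fun k hk => ?_, lpCoordProj_eq_self fun k hk => ?_]
    · by_contra hne
      exact hk ((hT i k hne).mp hi)
    · exact lp.single_apply_ne p i 1 fun hki => hk (hki ▸ hi)
  · rw [lpCoordProj_eq_zero fun k hk => ?_, lpCoordProj_eq_zero fun k hk => ?_, map_zero]
    · by_contra hne
      exact hi ((hT i k hne).mpr hk)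
    · exact lp.single_apply_ne p i 1 fun hki => hi (hki ▸ hk)

end Matrix

end Lp

theorem exists_continuous_hasCompactSupport_eq_one {X : Type*} (𝕜 : Type*) [RCLike 𝕜]
    [TopologicalSpace X] [RegularSpace X] [LocallyCompactSpace X] {U : Set X} (hU : IsOpen U)
    {x : X} (hx : x ∈ U) :
    ∃ f : X → 𝕜, Continuous f ∧ HasCompactSupport f ∧ f x = 1 ∧ Function.support f ⊆ U := by
  obtain ⟨f, hf1, hf0, hfc, -⟩ := exists_continuous_one_zero_of_isCompact
    (isCompact_singleton (x := x)) hU.isClosed_compl (by simpa using hx)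
  refine ⟨fun z => (f z : 𝕜), RCLike.continuous_ofReal.comp f.continuous,
    hfc.comp_left (g := ((↑) : ℝ → 𝕜)) RCLike.ofReal_zero, ?_, fun z hz => ?_⟩
  · simpa using hf1 (Set.mem_singleton x)
  · by_contra hzU
    exact hz (by simpa using hf0 hzU)

namespace EtaleGroupoid

variable {G : Type*} [TopologicalSpace G] (E : EtaleGroupoid G)

/-- The source of `γ`, as a unit. -/
abbrev srcUnit (γ : G) : E.unitSpace := ⟨E.src γ, E.src_src γ⟩

/-- The range of `γ`, as a unit. -/
abbrev rngUnit (γ : G) : E.unitSpace := ⟨E.rng γ, E.src_rng γ⟩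

/-- The unit `y`, as an element of `Gy`. -/
def fiberUnit (y : E.unitSpace) : E.Gx y := ⟨y, y.2⟩

section Algebra

variable {E} {a b c : G}

theorem mul_mul_inv_cancel (h : E.src a = E.rng b) : E.mul (E.mul a b) (E.inv b) = a := by
  rw [E.mul_assoc' _ _ _ h (E.rng_inv b).symm, E.mul_inv_self, ← h, E.mul_src_self]

theorem mul_inv_mul_cancel (h : E.src a = E.src b) : E.mul (E.mul a (E.inv b)) b = a := by
  rw [E.mul_assoc' _ _ _ (h.trans (E.rng_inv b).symm) (E.src_inv b), E.inv_mul_self, ← h,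
    E.mul_src_self]

theorem src_mul_inv (h : E.src a = E.src b) : E.src (E.mul a (E.inv b)) = E.rng b := by
  rw [E.src_mul _ _ (h.trans (E.rng_inv b).symm), E.src_inv]

theorem rng_mul_inv (h : E.src a = E.src b) : E.rng (E.mul a (E.inv b)) = E.rng a :=
  E.rng_mul _ _ (h.trans (E.rng_inv b).symm)

theorem eq_mul_inv_of_mul_eq (h : E.src a = E.rng b) (hab : E.mul a b = c) :
    a = E.mul c (E.inv b) := by
  rw [← hab, mul_mul_inv_cancel h]

theorem mul_inv_src_self (E : EtaleGroupoid G) (a : G) : E.mul a (E.inv (E.src a)) = a :=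
  (eq_mul_inv_of_mul_eq (E.rng_src a).symm (E.mul_src_self a)).symm

theorem mul_inv_mul_mul_inv (hab : E.src a = E.src b) (hbc : E.src b = E.src c) :
    E.mul (E.mul a (E.inv b)) (E.mul b (E.inv c)) = E.mul a (E.inv c) := by
  rw [← E.mul_assoc' _ _ _ (src_mul_inv hab) (hbc.trans (E.rng_inv c).symm),
    mul_inv_mul_cancel hab]

theorem mul_mul_inv_mul (ha : E.src a = E.rng c) (hb : E.src b = E.rng c) :
    E.mul (E.mul a c) (E.inv (E.mul b c)) = E.mul a (E.inv b) := by
  have hab : E.src a = E.src b := ha.trans hb.symm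
  refine (eq_mul_inv_of_mul_eq ?_ ?_).symm
  · rw [src_mul_inv hab, E.rng_mul _ _ hb]
  · rw [← E.mul_assoc' _ _ _ (src_mul_inv hab) hb, mul_inv_mul_cancel hab]

theorem eq_inv_of_mul_eq_rng (h : E.src a = E.rng b) (hab : E.mul a b = E.rng a) :
    a = E.inv b := by
  have ha : E.rng a = E.rng (E.inv b) := by
    rw [E.rng_inv, ← E.src_mul a b h, hab, E.src_rng]
  rw [eq_mul_inv_of_mul_eq h hab, ha, E.rng_self_mul]

theorem inv_inv (E : EtaleGroupoid G) (a : G) : E.inv (E.inv a) = a :=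
  (eq_inv_of_mul_eq_rng (E.rng_inv a).symm (E.mul_inv_self a)).symm

theorem inv_mul_inv (h : E.src a = E.src b) : E.inv (E.mul a (E.inv b)) = E.mul b (E.inv a) := by
  refine (eq_inv_of_mul_eq_rng ?_ ?_).symm
  · rw [src_mul_inv h.symm, rng_mul_inv h]
  · rw [mul_inv_mul_mul_inv h.symm h, E.mul_inv_self, rng_mul_inv h.symm]

theorem src_coe {y : G} (γ : E.Gx y) : E.src γ = y := γ.2

/-- Right translation by `η`, a bijection of `G r(η)` onto `Gy`, where `y = s(η)`. -/
def rightTranslation {y : G} (η : E.Gx y) : E.Gx (E.rngUnit η) ≃ E.Gx y where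
  toFun β := ⟨E.mul β η, (E.src_mul _ _ (src_coe β)).trans (src_coe η)⟩
  invFun γ := ⟨E.mul γ (E.inv η), src_mul_inv ((src_coe γ).trans (src_coe η).symm)⟩
  left_inv β := Subtype.ext (mul_mul_inv_cancel (src_coe β))
  right_inv γ := Subtype.ext (mul_inv_mul_cancel ((src_coe γ).trans (src_coe η).symm))

end Algebra

section Subgroupoid

/-- `H` is a wide subgroupoid of `G`: it contains the units and is closed under products and
inverses. No topological condition is imposed. -/
structure IsWideSubgroupoid (H : Set G) : Prop where
  unitSpace_subset : E.unitSpace ⊆ H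
  setMul_subset : E.setMul H H ⊆ H
  inv_mem : ∀ γ ∈ H, E.inv γ ∈ H

variable {E} {H : Set G}

/-- The equivalence relation on `Gy` whose classes are the right cosets `(H r(η)) η`. -/
def IsWideSubgroupoid.rightCosetSetoid (hH : E.IsWideSubgroupoid H) (y : G) :
    Setoid (E.Gx y) where
  r γ η := E.mul γ (E.inv η) ∈ H
  iseqv :=
    { refl := fun γ => by
        rw [E.mul_inv_self]
        exact hH.unitSpace_subset (E.src_rng _)
      symm := fun {γ η} hγη => by
        rw [← inv_mul_inv ((src_coe γ).trans (src_coe η).symm)]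
        exact hH.inv_mem _ hγη
      trans := fun {γ η ζ} hγη hηζ => by
        have hsrc : E.src (γ : G) = E.src (η : G) := (src_coe γ).trans (src_coe η).symm
        have hsrc' : E.src (η : G) = E.src (ζ : G) := (src_coe η).trans (src_coe ζ).symm
        refine hH.setMul_subset ⟨_, hγη, _, hηζ, ?_, (mul_inv_mul_mul_inv hsrc hsrc').symm⟩
        rw [src_mul_inv hsrc, rng_mul_inv hsrc'] }

theorem unitSpace_subset_Ii : E.unitSpace ⊆ E.Ii := by
  refine interior_maximal (fun x hx => ?_) E.isOpen_unitSpace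
  have hx : E.src x = x := hx
  change E.src x = E.rng x
  rw [← hx, E.src_src, E.rng_src]

theorem setMul_Iso_Iso_subset : E.setMul E.Iso E.Iso ⊆ E.Iso := by
  rintro _ ⟨γ, hγ, δ, hδ, hcomp, rfl⟩
  change E.src (E.mul γ δ) = E.rng (E.mul γ δ)
  rw [E.src_mul _ _ hcomp, E.rng_mul _ _ hcomp]
  exact ((show E.src δ = E.rng δ from hδ).trans hcomp.symm).trans hγ

theorem inv_mem_Ii {γ : G} (hγ : γ ∈ E.Ii) : E.inv γ ∈ E.Ii := by
  have hsub : E.inv ⁻¹' E.Ii ⊆ E.Iso := fun δ hδ => by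
    have hδ' : E.src (E.inv δ) = E.rng (E.inv δ) :=
      interior_subset (s := E.Iso) hδ
    rw [E.src_inv, E.rng_inv] at hδ'
    exact hδ'.symm
  refine interior_maximal hsub (isOpen_interior.preimage E.continuous_inv) ?_
  rwa [Set.mem_preimage, E.inv_inv]

theorem isWideSubgroupoid_Ii (hopen : IsOpen (E.setMul E.Ii E.Ii)) :
    E.IsWideSubgroupoid E.Ii where
  unitSpace_subset := unitSpace_subset_Ii
  setMul_subset := interior_maximal (Set.Subset.trans (by
    rintro _ ⟨γ, hγ, δ, hδ, h⟩
    exact ⟨γ, interior_subset hγ, δ, interior_subset hδ, h⟩) setMul_Iso_Iso_subset) hopen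
  inv_mem _ := inv_mem_Ii

end Subgroupoid

/-- The space `ℓᵖ(Gy)`. -/
abbrev FiberLp (𝕜 : Type*) [NormedField 𝕜] (p : ℝ≥0∞) (y : G) : Type _ :=
  lp (fun _ : E.Gx y => 𝕜) p

open Classical in
/-- A reduced groupoid algebra on `ℓᵖ`: a normed ring `R` whose norm is the supremum of the norms
in the regular representations `lam y` on `ℓᵖ(Gy)`, with a map `of` from functions on `G` that is
meaningful on `C_c(G)`, where it has dense image, and with Renault's map `j`. For `𝕜 = ℂ`, `p = 2`
and `R` complete this is `C*_r(G)`. -/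
structure ReducedAlgebra (𝕜 : Type*) [NontriviallyNormedField 𝕜] (p : ℝ≥0∞) [Fact (1 ≤ p)]
    (R : Type*) [NonUnitalNormedRing R] where
  lam : ∀ y : E.unitSpace, R →ₙ+* (E.FiberLp 𝕜 p y →L[𝕜] E.FiberLp 𝕜 p y)
  j : R → G → 𝕜
  of : (G → 𝕜) → R
  dense_range : Dense {a : R | ∃ g : G → 𝕜, Continuous g ∧ HasCompactSupport g ∧ a = of g}
  lam_of_single : ∀ g : G → 𝕜, Continuous g → HasCompactSupport g →
    ∀ (y : E.unitSpace) (η γ : E.Gx y),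
      lam y (of g) (lp.single p η 1) γ = g (E.mul γ (E.inv η))
  norm_eq_iSup : ∀ a : R, ‖a‖ = ⨆ y, ‖lam y a‖
  j_coe : ∀ (a : R) (y : E.unitSpace) (γ : E.Gx y),
    j a γ = lam y a (lp.single p (E.fiberUnit y) 1) γ

namespace ReducedAlgebra

variable {E} {𝕜 : Type*} [NontriviallyNormedField 𝕜] {p : ℝ≥0∞} [Fact (1 ≤ p)]
  {R : Type*} [NonUnitalNormedRing R] (A : E.ReducedAlgebra 𝕜 p R)

theorem norm_lam_le (y : E.unitSpace) (a : R) : ‖A.lam y a‖ ≤ ‖a‖ := by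
  by_cases hbdd : BddAbove (Set.range fun y => ‖A.lam y a‖)
  · rw [A.norm_eq_iSup]
    exact le_ciSup hbdd y
  -- An unbounded family would have supremum `0` by convention, which forces `a = 0`.
  · have ha : a = 0 := by
      rw [← norm_eq_zero, A.norm_eq_iSup, Real.iSup_of_not_bddAbove hbdd]
    rw [ha, map_zero, norm_zero, norm_zero]

theorem continuous_lam (y : E.unitSpace) : Continuous (A.lam y) :=
  AddMonoidHomClass.continuous_of_bound (A.lam y) 1
    (by simpa only [one_mul] using A.norm_lam_le y)

open Classical in
theorem j_apply (a : R) (γ : G) :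
    A.j a γ = A.lam (E.srcUnit γ) a
      (lp.single p (E.fiberUnit (E.srcUnit γ)) 1) ⟨γ, rfl⟩ :=
  A.j_coe a (E.srcUnit γ) ⟨γ, rfl⟩

theorem j_of {g : G → 𝕜} (hg : Continuous g) (hgs : HasCompactSupport g) : A.j (A.of g) = g := by
  ext γ
  rw [A.j_apply, A.lam_of_single g hg hgs]
  exact congrArg g (E.mul_inv_src_self γ)

theorem j_sub (a b : R) : A.j (a - b) = A.j a - A.j b := by
  ext γ
  simp only [Pi.sub_apply, A.j_apply, map_sub]
  rfl

theorem norm_j_le (a : R) (γ : G) : ‖A.j a γ‖ ≤ ‖a‖ := by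
  classical
  have hp : 0 < p := zero_lt_one.trans_le Fact.out
  let y := E.srcUnit γ
  let v : E.FiberLp 𝕜 p y := lp.single p (E.fiberUnit y) 1
  have hv : ‖v‖ = 1 := (lp.norm_single hp _ _).trans norm_one
  calc ‖A.j a γ‖ = ‖A.lam y a v ⟨γ, rfl⟩‖ := by rw [A.j_apply]
    _ ≤ ‖A.lam y a v‖ := lp.norm_apply_le_norm hp.ne' _ _
    _ ≤ ‖A.lam y a‖ * ‖v‖ := (A.lam y a).le_opNorm v
    _ ≤ ‖a‖ := by rw [hv, mul_one]; exact A.norm_lam_le y a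

theorem continuous_j (a : R) : Continuous (A.j a) := by
  refine continuous_of_uniform_approx_of_continuous fun u hu => ?_
  obtain ⟨ε, hε, hεu⟩ := Metric.mem_uniformity_dist.mp hu
  obtain ⟨_, ⟨g, hg, hgs, rfl⟩, hdist⟩ := A.dense_range.exists_dist_lt a hε
  refine ⟨g, hg, fun γ => hεu ?_⟩
  calc dist (A.j a γ) (g γ) = ‖A.j (a - A.of g) γ‖ := by
        rw [A.j_sub, A.j_of hg hgs, dist_eq_norm, Pi.sub_apply]
    _ ≤ ‖a - A.of g‖ := A.norm_j_le _ γ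
    _ = dist a (A.of g) := (dist_eq_norm _ _).symm
    _ < ε := hdist

theorem lam_lpCongrLeft_rightTranslation (hp : p ≠ ∞) {y : E.unitSpace} (a : R) (η : E.Gx y)
    (f : E.FiberLp 𝕜 p (E.rngUnit η)) :
    A.lam y a (lpCongrLeft 𝕜 (rightTranslation η) f) =
      lpCongrLeft 𝕜 (rightTranslation η) (A.lam (E.rngUnit η) a f) := by
  classical
  let U := (lpCongrLeft 𝕜 (p := p) (F := 𝕜) (rightTranslation η)).toContinuousLinearEquiv
  suffices h : (A.lam y a).comp U.toContinuousLinearMap =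
      U.toContinuousLinearMap.comp (A.lam (E.rngUnit η) a) from DFunLike.congr_fun h f
  have hclosed : IsClosed {a : R | (A.lam y a).comp U.toContinuousLinearMap =
      U.toContinuousLinearMap.comp (A.lam (E.rngUnit η) a)} :=
    isClosed_eq ((A.continuous_lam y).clm_comp_const _)
      ((A.continuous_lam (E.rngUnit η)).const_clm_comp _)
  refine A.dense_range.induction ?_ hclosed a
  rintro _ ⟨g, hg, hgs, rfl⟩
  refine lp_ext_single hp fun β => lp.ext (funext fun γ => ?_)
  obtain ⟨γ, rfl⟩ := (rightTranslation η).surjective γ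
  change A.lam y (A.of g) (lpCongrLeft 𝕜 (rightTranslation η) (lp.single p β 1)) _ =
    lpCongrLeft 𝕜 (rightTranslation η) (A.lam (E.rngUnit η) (A.of g) (lp.single p β 1)) _
  rw [lpCongrLeft_single, lpCongrLeft_apply_apply, A.lam_of_single g hg hgs,
    A.lam_of_single g hg hgs]
  exact congrArg g (mul_mul_inv_mul (src_coe γ) (src_coe β))

open Classical in
theorem lam_single_apply (hp : p ≠ ∞) {y : E.unitSpace} (a : R) (η γ : E.Gx y) :
    A.lam y a (lp.single p η 1) γ = A.j a (E.mul γ (E.inv η)) := by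
  have hη : rightTranslation η (E.fiberUnit (E.rngUnit η)) = η := Subtype.ext (E.rng_self_mul η)
  have hγ : rightTranslation η ((rightTranslation η).symm γ) = γ :=
    (rightTranslation η).apply_symm_apply γ
  calc A.lam y a (lp.single p η 1) γ
      = lpCongrLeft 𝕜 (rightTranslation η)
          (A.lam (E.rngUnit η) a (lp.single p (E.fiberUnit (E.rngUnit η)) 1)) γ := by
        rw [← A.lam_lpCongrLeft_rightTranslation hp, lpCongrLeft_single, hη]
    _ = A.lam (E.rngUnit η) a (lp.single p (E.fiberUnit (E.rngUnit η)) 1)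
          ((rightTranslation η).symm γ) := by
        rw [← lpCongrLeft_apply_apply (𝕜 := 𝕜) (rightTranslation η), hγ]
    _ = A.j a (E.mul γ (E.inv η)) :=
        (A.j_coe a (E.rngUnit η) ((rightTranslation η).symm γ)).symm

theorem hasSum_j_mul (hp : p ≠ ∞) (a b : R) (γ : G) :
    HasSum (fun β : E.Gx (E.src γ) => A.j b β * A.j a (E.mul γ (E.inv β))) (A.j (a * b) γ) := by
  classical
  have h := hasSum_mul_apply_single hp (A.lam (E.srcUnit γ) a)
    (A.lam (E.srcUnit γ) b (lp.single p (E.fiberUnit (E.srcUnit γ)) 1)) ⟨γ, rfl⟩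
  simp only [← A.j_coe] at h
  simp only [A.lam_single_apply hp] at h
  rw [A.j_apply, map_mul]
  exact h

theorem hasSum_j_of_mul_of (hp : p ≠ ∞) {f g : G → 𝕜} (hf : Continuous f)
    (hfc : HasCompactSupport f) (hg : Continuous g) (hgc : HasCompactSupport g) (γ : G) :
    HasSum (fun β : E.Gx (E.src γ) => g β * f (E.mul γ (E.inv β)))
      (A.j (A.of f * A.of g) γ) := by
  simpa only [A.j_of hf hfc, A.j_of hg hgc] using A.hasSum_j_mul hp (A.of f) (A.of g) γ

theorem support_j_of_mul_of_subset (hp : p ≠ ∞) {f g : G → 𝕜} (hf : Continuous f)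
    (hfc : HasCompactSupport f) (hg : Continuous g) (hgc : HasCompactSupport g) :
    Function.support (A.j (A.of f * A.of g)) ⊆
      E.setMul (Function.support f) (Function.support g) := by
  intro z hz
  obtain ⟨β, hβ⟩ : ∃ β : E.Gx (E.src z), g β * f (E.mul z (E.inv β)) ≠ 0 := by
    by_contra! hzero
    exact hz ((A.hasSum_j_of_mul_of hp hf hfc hg hgc z).unique
      (by simpa only [hzero] using hasSum_zero))
  have hβz : E.src z = E.src (β : G) := (src_coe β).symm
  exact ⟨_, right_ne_zero_of_mul hβ, β, left_ne_zero_of_mul hβ, src_mul_inv hβz,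
    (mul_inv_mul_cancel hβz).symm⟩

theorem j_of_mul_of_apply_mul (hp : p ≠ ∞) {f g : G → 𝕜} (hf : Continuous f)
    (hfc : HasCompactSupport f) (hg : Continuous g) (hgc : HasCompactSupport g) {W : Set G}
    (hW : W.InjOn E.src) (hgW : Function.support g ⊆ W) {γ δ : G} (hδ : δ ∈ W)
    (hγδ : E.src γ = E.rng δ) : A.j (A.of f * A.of g) (E.mul γ δ) = g δ * f γ := by
  have hsrc : E.src (E.mul γ δ) = E.src δ := E.src_mul _ _ hγδ
  have hsum := hasSum_single (⟨δ, hsrc.symm⟩ : E.Gx (E.src (E.mul γ δ)))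
    (f := fun β : E.Gx _ => g β * f (E.mul (E.mul γ δ) (E.inv β))) fun β hβ => ?_
  · rw [(A.hasSum_j_of_mul_of hp hf hfc hg hgc _).unique hsum, mul_mul_inv_cancel hγδ]
  · by_contra hne
    exact hβ (Subtype.ext (hW (hgW (left_ne_zero_of_mul hne)) hδ ((src_coe β).trans hsrc)))

theorem isOpen_setMul {𝕜 : Type*} [RCLike 𝕜] [RegularSpace G] [LocallyCompactSpace G]
    (A : E.ReducedAlgebra 𝕜 p R) (hp : p ≠ ∞) {U V : Set G} (hU : IsOpen U) (hV : IsOpen V) :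
    IsOpen (E.setMul U V) := by
  refine isOpen_iff_mem_nhds.mpr ?_
  rintro _ ⟨γ, hγ, δ, hδ, hγδ, rfl⟩
  obtain ⟨W, hW, hδW, hinj, -⟩ := E.etale δ
  obtain ⟨f, hf, hfc, hf1, hfU⟩ := exists_continuous_hasCompactSupport_eq_one 𝕜 hU hγ
  obtain ⟨g, hg, hgc, hg1, hgVW⟩ :=
    exists_continuous_hasCompactSupport_eq_one 𝕜 (hV.inter hW) ⟨hδ, hδW⟩
  have hval : A.j (A.of f * A.of g) (E.mul γ δ) = 1 := by
    rw [A.j_of_mul_of_apply_mul hp hf hfc hg hgc hinj (fun _ hβ => (hgVW hβ).2) hδW hγδ, hf1,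
      hg1, mul_one]
  refine Filter.mem_of_superset ((A.continuous_j _).isOpen_support.mem_nhds ?_)
    ((A.support_j_of_mul_of_subset hp hf hfc hg hgc).trans ?_)
  · rw [Function.mem_support, hval]
    exact one_ne_zero
  · rintro _ ⟨α, hα, β, hβ, hαβ⟩
    exact ⟨α, hfU hα, β, (hgVW hβ).1, hαβ⟩

theorem isWideSubgroupoid_Ii {𝕜 : Type*} [RCLike 𝕜] [RegularSpace G] [LocallyCompactSpace G]
    (A : E.ReducedAlgebra 𝕜 p R) (hp : p ≠ ∞) : E.IsWideSubgroupoid E.Ii :=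
  EtaleGroupoid.isWideSubgroupoid_Ii (A.isOpen_setMul hp isOpen_interior isOpen_interior)

section Expectation

/-- The compression of `lam y a` to `ℓᵖ(Hy)`. -/
noncomputable def compression (H : Set G) (y : E.unitSpace) (a : R) :
    E.FiberLp 𝕜 p y →L[𝕜] E.FiberLp 𝕜 p y :=
  (lpCoordProj 𝕜 {γ : E.Gx y | ↑γ ∈ H}).comp
    ((A.lam y a).comp (lpCoordProj 𝕜 {γ : E.Gx y | ↑γ ∈ H}))

theorem norm_compression_le (H : Set G) (y : E.unitSpace) (a : R) :
    ‖A.compression H y a‖ ≤ ‖a‖ :=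
  (norm_lpCoordProj_comp_comp_le _ _).trans (A.norm_lam_le y a)

variable {H : Set G} {b : R} {y : E.unitSpace}

theorem commute_lam_lpCoordProj_rightCoset (hH : E.IsWideSubgroupoid H) (hp : p ≠ ∞)
    (hb : ∀ γ ∉ H, A.j b γ = 0)
    (c : Quotient (hH.rightCosetSetoid y)) :
    Commute (A.lam y b) (lpCoordProj 𝕜 (Quotient.mk (hH.rightCosetSetoid y) ⁻¹' {c})) := by
  classical
  refine commute_lpCoordProj_of_forall_ne_zero hp fun η γ hne => ?_
  rw [A.lam_single_apply hp] at hne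
  have hγη : Quotient.mk (hH.rightCosetSetoid y) γ = Quotient.mk _ η :=
    Quotient.sound (not_imp_comm.mp (hb _) hne)
  simp only [Set.mem_preimage, Set.mem_singleton_iff, hγη]

theorem norm_comp_lam_comp_rightCoset_le (hp : p ≠ ∞) (a : R) (η : E.Gx y) :
    ‖(lpCoordProj 𝕜 {γ : E.Gx y | E.mul γ (E.inv η) ∈ H}).comp
      ((A.lam y a).comp (lpCoordProj 𝕜 {γ : E.Gx y | E.mul γ (E.inv η) ∈ H}))‖ ≤
      ‖A.compression H (E.rngUnit η) a‖ := by
  let U := lpCongrLeft 𝕜 (p := p) (F := 𝕜) (rightTranslation η)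
  have hpre : rightTranslation η ⁻¹' {γ : E.Gx y | E.mul γ (E.inv η) ∈ H} =
      {β : E.Gx (E.rngUnit η) | ↑β ∈ H} := by
    ext β
    exact iff_of_eq (congrArg (· ∈ H) (mul_mul_inv_cancel (src_coe β)))
  refine ContinuousLinearMap.opNorm_le_bound _ (norm_nonneg _) fun f => ?_
  obtain ⟨f, rfl⟩ := U.surjective f
  have hconj : (lpCoordProj 𝕜 {γ : E.Gx y | E.mul γ (E.inv η) ∈ H}).comp
      ((A.lam y a).comp (lpCoordProj 𝕜 {γ : E.Gx y | E.mul γ (E.inv η) ∈ H})) (U f) =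
      U (A.compression H (E.rngUnit η) a f) := by
    simp only [ContinuousLinearMap.comp_apply, compression, U, lpCoordProj_lpCongrLeft, hpre,
      A.lam_lpCongrLeft_rightTranslation hp]
  rw [hconj, U.norm_map, U.norm_map]
  exact (A.compression H (E.rngUnit η) a).le_opNorm f

theorem norm_lam_le_of_norm_compression_le (hH : E.IsWideSubgroupoid H) (hp : p ≠ ∞)
    (hb : ∀ γ ∉ H, A.j b γ = 0) {M : ℝ} (hM : ∀ x, ‖A.compression H x b‖ ≤ M) :
    ‖A.lam y b‖ ≤ M := by
  refine opNorm_le_of_commute_lpCoordProj_fiber hp (Quotient.mk (hH.rightCosetSetoid y))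
    (A.commute_lam_lpCoordProj_rightCoset hH hp hb) ((norm_nonneg _).trans (hM y)) ?_
  refine Quotient.ind fun η => ?_
  have hclass : Quotient.mk (hH.rightCosetSetoid y) ⁻¹' {Quotient.mk _ η} =
      {γ : E.Gx y | E.mul γ (E.inv η) ∈ H} := Set.ext fun γ => Quotient.eq
  rw [hclass]
  exact (A.norm_comp_lam_comp_rightCoset_le hp b η).trans (hM _)

end Expectation

end ReducedAlgebra

end EtaleGroupoid

theorem stmt11_general {G : Type*} [TopologicalSpace G] {E : EtaleGroupoid G} {𝕜 : Type*}
    [NontriviallyNormedField 𝕜] {p : ℝ≥0∞} [Fact (1 ≤ p)] (hp : p ≠ ∞) {R : Type*}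
    [NonUnitalNormedRing R] (A : E.ReducedAlgebra 𝕜 p R) {H : Set G}
    (hH : E.IsWideSubgroupoid H) {b : R} (hb : ∀ γ ∉ H, A.j b γ = 0) :
    ⨆ y, ‖A.compression H y b‖ = ‖b‖ := by
  have hle : ∀ y, ‖A.compression H y b‖ ≤ ‖b‖ := fun y => A.norm_compression_le H y b
  refine le_antisymm (Real.iSup_le hle (norm_nonneg b)) ?_
  rw [A.norm_eq_iSup b]
  refine Real.iSup_le (fun y => ?_) (Real.iSup_nonneg fun y => norm_nonneg _)
  exact A.norm_lam_le_of_norm_compression_le hH hp hb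
    (le_ciSup ⟨‖b‖, Set.forall_mem_range.mpr hle⟩)

open EtaleGroupoid in
open Classical in
/-- the map `b ↦ ⊕_y Φ_y(b)`, where `Φ_y(b) = P_{Ii y} λ_y(b) P_{Ii y}`,
is isometric on `A = {b : j(b) = 0 off Ii}`, i.e. `sup_y ‖Φ_y(b)‖ = ‖b‖` for `b ∈ A`.
The reduced C*-algebra `C*_r(G)` is axiomatised as in Statement 0: a C*-algebra `R`
with regular representations `lam y`, a dense copy `of` of `C_c(G)` acting by the
usual matrix coefficients, the reduced norm condition, and Renault's `j`-map.
`P y` is the coordinate projection of `ℓ²(Gy)` onto `ℓ²(Ii y)`. -/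
theorem stmt11 {G : Type*} [TopologicalSpace G] [T2Space G] [LocallyCompactSpace G]
    (E : EtaleGroupoid G) (hab : E.IsAbelianIi)
    (R : Type*) [NormedRing R] [StarRing R] [CStarRing R] [NormedAlgebra ℂ R]
    [StarModule ℂ R] [CompleteSpace R]
    (lam : ∀ y : ↥E.unitSpace,
      R →⋆ₐ[ℂ] (lp (fun _ : ↥(E.Gx ↑y) => ℂ) 2 →L[ℂ] lp (fun _ : ↥(E.Gx ↑y) => ℂ) 2))
    (j : R → G → ℂ)
    (of : (G → ℂ) → R)
    (hdense : Dense {a : R | ∃ g : G → ℂ, Continuous g ∧ HasCompactSupport g ∧ a = of g})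
    (hof : ∀ g : G → ℂ, Continuous g → HasCompactSupport g →
      ∀ (y : ↥E.unitSpace) (η γ : ↥(E.Gx ↑y)),
        (lam y (of g)) (lp.single 2 η 1) γ = g (E.mul ↑γ (E.inv ↑η)))
    (hnorm : ∀ a : R, ‖a‖ = ⨆ y : ↥E.unitSpace, ‖lam y a‖)
    (hj : ∀ (a : R) (y : ↥E.unitSpace) (γ : ↥(E.Gx ↑y)),
      j a ↑γ = (lam y a)
        (lp.single 2 (⟨(y : G), show E.src ↑y = ↑y from y.2⟩ : ↥(E.Gx ↑y)) 1) γ)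
    (P : ∀ y : ↥E.unitSpace,
      lp (fun _ : ↥(E.Gx ↑y) => ℂ) 2 →L[ℂ] lp (fun _ : ↥(E.Gx ↑y) => ℂ) 2)
    (hP1 : ∀ (y : ↥E.unitSpace) (f : lp (fun _ : ↥(E.Gx ↑y) => ℂ) 2) (β : ↥(E.Gx ↑y)),
      (↑β : G) ∈ E.Ii → P y f β = f β)
    (hP2 : ∀ (y : ↥E.unitSpace) (f : lp (fun _ : ↥(E.Gx ↑y) => ℂ) 2) (β : ↥(E.Gx ↑y)),
      (↑β : G) ∉ E.Ii → P y f β = 0)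
    (b : R) (hb : ∀ γ, γ ∉ E.Ii → j b γ = 0) :
    ⨆ y : ↥E.unitSpace, ‖(P y).comp ((lam y b).comp (P y))‖ = ‖b‖ := by
  let A : E.ReducedAlgebra ℂ 2 R :=
    { lam y := NonUnitalRingHomClass.toNonUnitalRingHom (lam y)
      j := j
      of := of
      dense_range := hdense
      lam_of_single := hof
      norm_eq_iSup := hnorm
      j_coe := hj }
  have hP (y : E.unitSpace) : P y = lpCoordProj ℂ {β : E.Gx y | ↑β ∈ E.Ii} :=
    eq_lpCoordProj (hP1 y) (hP2 y)
  simp only [hP]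
  exact stmt11_general ENNReal.ofNat_ne_top A (A.isWideSubgroupoid_Ii ENNReal.ofNat_ne_top) hb
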